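/- Assume I is m-primary. (a) For every integer μ ≥ 0, the downgrading map λ₂^μ : (J⟨2⟩/J⟨1⟩)_μ → (J⟨1⟩/KS)_{μ+d} induced by Δ is injective: for every α ∈ J⟨2⟩ homogeneous of X-degree μ, if Δα ∈ KS then α ∈ J⟨1⟩. (b) For every integer μ ≥ μ₀(I), λ₂^μ is surjective: for every β ∈ J⟨1⟩ homogeneous of X-degree μ+d, there exists α ∈ J⟨2⟩ homogeneous of X-degree μ with Δα − β ∈ KS. -/

import Mathlib

/-!
Write `I` for the ideal generated by the forms `f_i`.

*Injectivity.* An element `P` of `J⟨2⟩` has no term of `T`-degree `0`, so `P = ∑ T_i g_i` with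
`Δ P = ∑ f_i g_i` (`exists_decomp`). An element of `KS` is of the form `∑ f_i h_i` with
`∑ T_i h_i = 0` (`KS_decomp`). If both expressions agree, `g - h` is a syzygy of `f` with
coefficients in `S`, and `P = ∑ T_i (g_i - h_i)` lies in `J⟨1⟩` (`syz_mem_J1`).

*Surjectivity when `R_{μ+d} ⊆ I`.* A linear syzygy `∑ a_i T_i` with `a_i` of degree `μ + d` can be
polarized: if `a_i = ∑ b_{il} f_l`, then `α = ∑ b_{il} T_l T_i` belongs to `J`, because
`f_m T_l ≡ f_l T_m` modulo `KS` makes `I α` lie in `J⟨1⟩`, and `Δ (T_l P) ≡ f_l P` modulo `KS` shows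
that `Δ α` is the given linear form (`quad_mem_Jset`, `down_X_mul`, `exists_lift`).

*`R_{μ+d} ⊆ I` above the threshold.* Let `r` be a form of degree `s` outside `I`. Then `r` times the
volume form is a nonzero class in the Koszul cohomology `H^{n+1}(f; R)` (`hasClass_start`). Since
`I` contains a power of every variable `x`, Koszul cohomology over a localization `M_x` vanishes, and
the sequences `0 → M → M_x → M_x / M → 0` for `x = X_0, …, X_{n-1}` in turn show that the class
comes from a nonzero class in `H^1(f; H^n_m(R))` (`hasClass_step`, `hasClass_end`). Here all the
modules are subquotients of the ring of Laurent polynomials, given by sets of exponents. By the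
residue duality between `R` and `H^n_m(R)`, the latter class is a functional on syzygies of degree
`e = n d - n - s` which vanishes on Koszul syzygies and not on all syzygies (`exists_syzygy`). So
`H_1` is nonzero in degree `e + d`, and `indeg H_1 ≤ (n + 1) d - n - s`. This excludes
`s = μ + d` with `μ ≥ (n - 1)(d - 1) + d - indeg H_1`.
-/

open MvPolynomial

noncomputable section

variable {k : Type*} [Field k] {n : ℕ}

/-- `R = k[X₁, …, X_n]`. -/
abbrev Rx (k : Type*) [Field k] (n : ℕ) := MvPolynomial (Fin n) k

/-- `S = R[T₀, …, T_n]`. -/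
abbrev Sx (k : Type*) [Field k] (n : ℕ) := MvPolynomial (Fin (n+1)) (Rx k n)

/-- The irrelevant maximal ideal `m = (X₁, …, X_n)` of `R`. -/
def mIdeal (k : Type*) [Field k] (n : ℕ) : Ideal (Rx k n) :=
  Ideal.span (Set.range (X : Fin n → Rx k n))

/-- The extension `m·S` of `m` to `S`. -/
def mS (k : Type*) [Field k] (n : ℕ) : Ideal (Sx k n) :=
  Ideal.span (Set.range fun i : Fin n => (C (X i : Rx k n) : Sx k n))

/-- An element of `S` is homogeneous of `X`-degree `μ` if all of its `R`-coefficients are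
homogeneous of degree `μ`. -/
def XHomog (μ : ℕ) (P : Sx k n) : Prop :=
  ∀ α : (Fin (n+1)) →₀ ℕ, (MvPolynomial.coeff α P).IsHomogeneous μ

/-- The ideal `KS ⊆ S` of Koszul relations, generated by `f_i T_j - f_j T_i`, `i < j`. -/
def KS (f : Fin (n+1) → Rx k n) : Ideal (Sx k n) :=
  Ideal.span {P | ∃ i j : Fin (n+1), i < j ∧
    P = C (f i) * X j - C (f j) * X i}

/-- The ideal `J⟨1⟩ ⊆ S` generated by the linear forms `a₀T₀ + ⋯ + a_nT_n` coming from
syzygies `(a₀, …, a_n)` of `f`. -/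
def J1 (f : Fin (n+1) → Rx k n) : Ideal (Sx k n) :=
  Ideal.span {P | ∃ a : Fin (n+1) → Rx k n,
    (∑ i, a i * f i) = 0 ∧ P = ∑ i, C (a i) * X i}

/-- `J`, the saturation of `J⟨1⟩` with respect to `m·S`, as a subset of `S`. -/
def Jset (f : Fin (n+1) → Rx k n) : Set (Sx k n) :=
  {P | ∃ N : ℕ, ∀ Q ∈ (mS k n) ^ N, Q * P ∈ J1 f}

/-- `J⟨ℓ⟩ ⊆ S`: the ideal generated by the elements of `J` of `T`-degree at most `ℓ`
(note that `J⟨0⟩ = 0`). -/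
def Jl (f : Fin (n+1) → Rx k n) (ℓ : ℕ) : Ideal (Sx k n) :=
  Ideal.span {P | P ∈ Jset f ∧ P.totalDegree ≤ ℓ}

/-- The downgrading map `Δ : S → S`, sending `c·T^α` to `c·f_{i(α)}·T^{α - e_{i(α)}}`
where `i(α)` is the least index `i` with `α_i > 0`, and `c` to `0` for `c ∈ R`. -/
def down (f : Fin (n+1) → Rx k n) (P : Sx k n) : Sx k n :=
  ∑ α ∈ P.support, dite (α = 0) (fun _ => 0) (fun h =>
    letI i := α.support.min' (Finsupp.support_nonempty_iff.mpr h)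
    monomial (α - Finsupp.single i 1) (MvPolynomial.coeff α P * f i))

/-- The (first) Koszul boundaries `B₁ ⊆ R^{n+1}`. -/
def koszulB1 (f : Fin (n+1) → Rx k n) : Submodule (Rx k n) (Fin (n+1) → Rx k n) :=
  Submodule.span (Rx k n)
    {v | ∃ i j : Fin (n+1), i < j ∧ v = Pi.single j (f i) - Pi.single i (f j)}

/-- `(H₁)_ν ≠ 0`. -/
def H1Nonzero (f : Fin (n+1) → Rx k n) (d ν : ℕ) : Prop :=
  ∃ a : Fin (n+1) → Rx k n, ∃ e : ℕ, ν = e + d ∧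
    (∀ i, (a i).IsHomogeneous e) ∧ (∑ i, a i * f i) = 0 ∧ a ∉ koszulB1 f

/-- The initial degree, as an extended natural number. -/
def indegE (s : Set ℕ) : ℕ∞ := sInf ((↑) '' s)

section TSide

/-! ### The downgrading map and Koszul relations -/

theorem lin_mem_J1 (f : Fin (n+1) → Rx k n) (a : Fin (n+1) → Rx k n)
    (ha : ∑ i, a i * f i = 0) : (∑ i, C (a i) * X i : Sx k n) ∈ J1 f :=
  Ideal.subset_span ⟨a, ha, rfl⟩

theorem KS_rel (f : Fin (n+1) → Rx k n) (i j : Fin (n+1)) :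
    (C (f i) * X j - C (f j) * X i : Sx k n) ∈ KS f := by
  rcases lt_trichotomy i j with h | h | h
  · exact Ideal.subset_span ⟨i, j, h, rfl⟩
  · subst h; simp
  · rw [← neg_mem_iff, neg_sub]
    exact Ideal.subset_span ⟨j, i, h, rfl⟩

theorem KS_le_J1 (f : Fin (n+1) → Rx k n) : KS f ≤ J1 f := by
  refine Ideal.span_le.mpr ?_
  rintro _ ⟨i, j, hij, rfl⟩
  have h := lin_mem_J1 f (Pi.single j (f i) - Pi.single i (f j)) (by
    simp only [Pi.sub_apply, sub_mul, Finset.sum_sub_distrib, Pi.single_apply, ite_mul, zero_mul,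
      Finset.sum_ite_eq', Finset.mem_univ, if_true]
    ring)
  have e : (∑ l, C ((Pi.single j (f i) - Pi.single i (f j) : Fin (n+1) → Rx k n) l) * X l
      : Sx k n) = C (f i) * X j - C (f j) * X i := by
    simp only [Pi.sub_apply, C_sub, sub_mul, Finset.sum_sub_distrib, Pi.single_apply, apply_ite C,
      C_0, ite_mul, zero_mul, Finset.sum_ite_eq', Finset.mem_univ, if_true]
  rwa [e] at h

/-- The value of the downgrading map on the monomial `T^γ`. -/
def downMon (f : Fin (n+1) → Rx k n) (γ : Fin (n+1) →₀ ℕ) : Sx k n :=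
  if h : γ = 0 then 0 else
    monomial (γ - Finsupp.single (γ.support.min' (Finsupp.support_nonempty_iff.mpr h)) 1)
      (f (γ.support.min' (Finsupp.support_nonempty_iff.mpr h)))

theorem down_eq (f : Fin (n+1) → Rx k n) (P : Sx k n) :
    down f P = (AddMonoidAlgebra.coeff P).sum fun γ c => C c * downMon f γ := by
  rw [MvPolynomial.sum_def]
  refine Finset.sum_congr rfl fun γ _ => ?_
  unfold downMon
  split_ifs with h
  · simp
  · simp only [C_mul_monomial]

theorem down_add (f : Fin (n+1) → Rx k n) (P Q : Sx k n) :
    down f (P + Q) = down f P + down f Q := by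
  simp only [down_eq]
  exact Finsupp.sum_add_index' (by simp) (by intros; simp [add_mul])

theorem down_zero (f : Fin (n+1) → Rx k n) : down f 0 = 0 := by
  simp [down]

theorem down_sum (f : Fin (n+1) → Rx k n) {ι : Type*} (s : Finset ι) (P : ι → Sx k n) :
    down f (∑ i ∈ s, P i) = ∑ i ∈ s, down f (P i) :=
  map_sum (AddMonoidHom.mk' (down f) (down_add f)) P s

theorem down_monomial (f : Fin (n+1) → Rx k n) (γ : Fin (n+1) →₀ ℕ) (c : Rx k n) :
    down f (monomial γ c) = C c * downMon f γ := by
  rw [down_eq]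
  exact Finsupp.sum_single_index (by simp)

/-- Away from the origin, `T^γ` factors through the variable that `down` removes. -/
theorem downMon_spec (f : Fin (n+1) → Rx k n) {γ : Fin (n+1) →₀ ℕ} (h : γ ≠ 0) :
    ∃ i δ, γ = δ + Finsupp.single i 1 ∧ downMon f γ = monomial δ (f i) := by
  refine ⟨γ.support.min' (Finsupp.support_nonempty_iff.mpr h), _, ?_, dif_neg h⟩
  rw [tsub_add_cancel_of_le]
  rw [Finsupp.single_le_iff]
  have := Finset.min'_mem γ.support (Finsupp.support_nonempty_iff.mpr h)
  exact Nat.one_le_iff_ne_zero.mpr (Finsupp.mem_support_iff.mp this)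

/-- `P = P(0) + ∑ T_i g_i` with `Δ P = ∑ f_i g_i`, the equality holding in `S` and not only
modulo `KS`. -/
theorem exists_decomp (f : Fin (n+1) → Rx k n) (P : Sx k n) :
    ∃ g : Fin (n+1) → Sx k n, P = C (coeff 0 P) + ∑ i, X i * g i ∧
      down f P = ∑ i, C (f i) * g i := by
  classical
  induction P using MvPolynomial.induction_on' with
  | monomial γ c =>
    by_cases h : γ = 0
    · subst h
      refine ⟨0, by simp, ?_⟩
      rw [down_monomial]; simp [downMon]
    · obtain ⟨i, δ, e, h2⟩ := downMon_spec f h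
      refine ⟨Pi.single i (monomial δ c), ?_, ?_⟩
      · rw [coeff_monomial, if_neg h]
        simp only [Pi.single_apply, mul_ite, mul_zero, Finset.sum_ite_eq', Finset.mem_univ, if_true,
          C_0, zero_add]
        rw [e, X, monomial_mul, one_mul, add_comm δ]
      · rw [down_monomial, h2]
        simp only [Pi.single_apply, mul_ite, mul_zero, Finset.sum_ite_eq', Finset.mem_univ, if_true,
          C_mul_monomial, mul_comm c]
  | add P Q hP hQ =>
    obtain ⟨g, h1, h2⟩ := hP
    obtain ⟨g', h1', h2'⟩ := hQ
    refine ⟨g + g', ?_, ?_⟩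
    · simp only [coeff_add, C_add, Pi.add_apply, mul_add, Finset.sum_add_distrib]
      conv_lhs => rw [h1, h1']
      ring
    · simp only [down_add, h2, h2', Pi.add_apply, mul_add, Finset.sum_add_distrib]

/-- Koszul relations are `∑ f_i h_i` with `∑ T_i h_i = 0`: `h` is the Koszul syzygy of `T`. -/
theorem KS_decomp (f : Fin (n+1) → Rx k n) {P : Sx k n} (hP : P ∈ KS f) :
    ∃ h : Fin (n+1) → Sx k n, P = ∑ i, C (f i) * h i ∧ ∑ i, X i * h i = 0 := by
  induction hP using Submodule.span_induction with
  | mem P hP =>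
    obtain ⟨i, j, _, rfl⟩ := hP
    refine ⟨Pi.single i (X j) - Pi.single j (X i), ?_, ?_⟩ <;>
    simp only [Pi.sub_apply, mul_sub, Finset.sum_sub_distrib, Pi.single_apply, mul_ite, mul_zero,
      Finset.sum_ite_eq', Finset.mem_univ, if_true]
    ring
  | zero => exact ⟨0, by simp, by simp⟩
  | add P Q _ _ hP hQ =>
    obtain ⟨h, h1, h2⟩ := hP
    obtain ⟨h', h1', h2'⟩ := hQ
    refine ⟨h + h', ?_, ?_⟩
    · simp [mul_add, Finset.sum_add_distrib, ← h1, ← h1']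
    · simp [mul_add, Finset.sum_add_distrib, h2, h2']
  | smul s P _ hP =>
    obtain ⟨h, h1, h2⟩ := hP
    refine ⟨fun i => s * h i, ?_, ?_⟩
    · simp only [h1, smul_eq_mul, Finset.mul_sum, mul_left_comm]
    · simp only [mul_left_comm _ s, ← Finset.mul_sum, h2, mul_zero]

/-- A syzygy of `f` with coefficients in `S` is, coefficient by coefficient, a family of
syzygies over `R`. -/
theorem syz_mem_J1 (f : Fin (n+1) → Rx k n) (g : Fin (n+1) → Sx k n)
    (hg : ∑ i, C (f i) * g i = 0) : ∑ i, X i * g i ∈ J1 f := by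
  classical
  set s : Finset (Fin (n+1) →₀ ℕ) := Finset.univ.biUnion fun i => (g i).support with hs
  have hgi : ∀ i, g i = ∑ γ ∈ s, monomial γ (coeff γ (g i)) := fun i => by
    conv_lhs => rw [← support_sum_monomial_coeff (g i)]
    refine Finset.sum_subset (Finset.subset_biUnion_of_mem (fun i => (g i).support)
      (Finset.mem_univ i)) fun γ _ h => ?_
    rw [notMem_support_iff.mp h, monomial_zero]
  have e : ∑ i, X i * g i = ∑ γ ∈ s, monomial γ 1 * ∑ i, C (coeff γ (g i)) * X i := by
    simp only [Finset.mul_sum]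
    rw [Finset.sum_comm]
    refine Finset.sum_congr rfl fun i _ => ?_
    conv_lhs => rw [hgi i]
    rw [Finset.mul_sum]
    refine Finset.sum_congr rfl fun γ _ => ?_
    rw [← mul_assoc, mul_comm (monomial γ 1), C_mul_monomial, mul_one, mul_comm]
  rw [e]
  refine Ideal.sum_mem _ fun γ _ => Ideal.mul_mem_left _ _ (lin_mem_J1 f _ ?_)
  have := congrArg (coeff γ) hg
  simpa [coeff_sum, coeff_C_mul, mul_comm (coeff γ _)] using this

theorem mem_J1_of_down (f : Fin (n+1) → Rx k n) {P : Sx k n} (h0 : coeff 0 P = 0)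
    (h : down f P ∈ KS f) : P ∈ J1 f := by
  obtain ⟨g, h1, h2⟩ := exists_decomp f P
  obtain ⟨h', h3, h4⟩ := KS_decomp f h
  have e : P = ∑ i, X i * (g i - h' i) := by
    rw [h1, h0]
    simp [mul_sub, Finset.sum_sub_distrib, h4]
  rw [e]
  apply syz_mem_J1
  simp only [mul_sub, Finset.sum_sub_distrib, ← h2, ← h3, sub_self]

theorem J1_subset_Jl (f : Fin (n+1) → Rx k n) (ℓ : ℕ) (hl : 1 ≤ ℓ) : J1 f ≤ Jl f ℓ := by
  refine Ideal.span_le.mpr ?_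
  rintro _ ⟨a, ha, rfl⟩
  refine Ideal.subset_span ⟨⟨0, fun Q _ => Ideal.mul_mem_left _ _ (lin_mem_J1 f a ha)⟩, ?_⟩
  refine le_trans ?_ hl
  refine totalDegree_finsetSum_le fun i _ => ?_
  refine (totalDegree_mul _ _).trans ?_
  rw [totalDegree_C, totalDegree_X]

/-- Ring homomorphisms to domains that kill `J⟨1⟩` but not `m` kill its saturation. -/
theorem Jset_ker (f : Fin (n+1) → Rx k n) {B : Type*} [CommRing B] [IsDomain B]
    (φ : Sx k n →+* B) (hφ : ∀ P ∈ J1 f, φ P = 0) (i : Fin n) (hi : φ (C (X i)) ≠ 0)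
    {P : Sx k n} (hP : P ∈ Jset f) : φ P = 0 := by
  obtain ⟨N, hN⟩ := hP
  have h := hφ _ (hN (C (X i) ^ N) (Ideal.pow_mem_pow
    (show C (X i) ∈ mS k n from Ideal.subset_span ⟨i, rfl⟩) N))
  rw [map_mul, map_pow] at h
  exact (mul_eq_zero.mp h).resolve_left (pow_ne_zero _ hi)

theorem coeff_zero_of_mem_Jset (hn : 0 < n) (f : Fin (n+1) → Rx k n) {P : Sx k n}
    (hP : P ∈ Jset f) : coeff 0 P = 0 := by
  rw [← constantCoeff_eq]
  refine Jset_ker f constantCoeff (fun Q hQ => ?_) ⟨0, hn⟩ (by simp [constantCoeff_C]) hP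
  have : J1 f ≤ RingHom.ker (constantCoeff : Sx k n →+* Rx k n) := by
    refine Ideal.span_le.mpr ?_
    rintro _ ⟨a, ha, rfl⟩
    simp [RingHom.mem_ker]
  exact this hQ

theorem eval_of_mem_Jset (hn : 0 < n) (f : Fin (n+1) → Rx k n) {P : Sx k n}
    (hP : P ∈ Jset f) : eval f P = 0 := by
  refine Jset_ker f (eval f) (fun Q hQ => ?_) ⟨0, hn⟩ (by simp) hP
  have : J1 f ≤ RingHom.ker (eval f : Sx k n →+* Rx k n) := by
    refine Ideal.span_le.mpr ?_
    rintro _ ⟨a, ha, rfl⟩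
    simpa [RingHom.mem_ker] using ha
  exact this hQ

theorem coeff_zero_of_mem_Jl (hn : 0 < n) (f : Fin (n+1) → Rx k n) (ℓ : ℕ) {P : Sx k n}
    (hP : P ∈ Jl f ℓ) : coeff 0 P = 0 := by
  have : Jl f ℓ ≤ RingHom.ker (constantCoeff : Sx k n →+* Rx k n) := by
    refine Ideal.span_le.mpr ?_
    rintro P ⟨hP, -⟩
    exact coeff_zero_of_mem_Jset hn f hP
  exact this hP

theorem Jl_one_le (hn : 0 < n) (f : Fin (n+1) → Rx k n) : Jl f 1 ≤ J1 f := by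
  refine Ideal.span_le.mpr ?_
  rintro P ⟨hP, hd⟩
  have h0 := coeff_zero_of_mem_Jset hn f hP
  have e : P = ∑ i, X i * C (coeff (Finsupp.single i 1) P) := by
    classical
    ext1 γ
    rw [coeff_sum]
    simp only [mul_comm (X _) (C _), coeff_C_mul, coeff_X]
    by_cases h : ∃ i, Finsupp.single i 1 = γ
    · obtain ⟨i, rfl⟩ := h
      simp [Finsupp.single_left_inj]
    · push Not at h
      rw [Finset.sum_eq_zero fun i _ => by rw [if_neg (h i), mul_zero]]
      by_contra hc
      have h1 := (le_totalDegree (mem_support_iff.mpr hc)).trans hd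
      rcases Nat.le_one_iff_eq_zero_or_eq_one.mp h1 with h2 | h2
      · change γ.degree = 0 at h2
        rw [Finsupp.degree_eq_zero_iff] at h2
        exact hc (h2 ▸ h0)
      · change γ.degree = 1 at h2
        have hγ : γ ≠ 0 := by rintro rfl; simp at h2
        obtain ⟨i, hi⟩ := Finsupp.support_nonempty_iff.mpr hγ
        obtain ⟨δ, rfl⟩ := exists_add_of_le (Finsupp.single_le_iff.mpr
          (Nat.one_le_iff_ne_zero.mpr (Finsupp.mem_support_iff.mp hi)))
        have hδ : δ.degree = 0 := by simpa using h2
        rw [Finsupp.degree_eq_zero_iff] at hδ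
        exact h i (by rw [hδ, add_zero])
  have h1 := eval_of_mem_Jset hn f hP
  rw [e] at h1
  rw [SetLike.mem_coe, e]
  refine syz_mem_J1 f _ ?_
  rw [map_sum] at h1
  simp only [map_mul, eval_X, eval_C] at h1
  rw [← C_0, ← h1, map_sum]
  simp only [map_mul]

/-- `Δ (T_i P) = f_i P` modulo `KS`. -/
theorem down_X_mul (f : Fin (n+1) → Rx k n) (i : Fin (n+1)) (P : Sx k n) :
    down f (X i * P) - C (f i) * P ∈ KS f := by
  induction P using MvPolynomial.induction_on' with
  | monomial γ c =>
    rw [X, monomial_mul, one_mul, down_monomial]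
    have hne : Finsupp.single i 1 + γ ≠ 0 := fun h => by
      have := DFunLike.congr_fun h i
      simp at this
    obtain ⟨m, δ, e, h⟩ := downMon_spec f hne
    rw [h]
    by_cases hm : m = i
    · subst hm
      have : γ = δ := by
        rw [add_comm _ γ] at e; exact add_right_cancel e
      subst this
      rw [C_mul_monomial, C_mul_monomial, mul_comm, sub_self]
      exact zero_mem _
    · have h1 : Finsupp.single i 1 ≤ δ := by
        rw [Finsupp.single_le_iff]
        have := DFunLike.congr_fun e i
        simp [hm] at this
        omega
      obtain ⟨ε, rfl⟩ := exists_add_of_le h1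
      have h2 : γ = ε + Finsupp.single m 1 := by
        rw [add_assoc] at e; exact add_left_cancel e
      have h3 := Ideal.mul_mem_left (KS f) (monomial ε c) (KS_rel f m i)
      convert h3 using 1
      subst h2
      simp only [X, mul_sub, C_mul_monomial, monomial_mul, mul_one]
      rw [add_comm ε (Finsupp.single i 1), add_comm ε (Finsupp.single m 1), mul_comm c, mul_comm c]
  | add P Q hP hQ =>
    rw [mul_add, down_add, mul_add, add_sub_add_comm]
    exact add_mem hP hQ

end TSide

/-! ### Lifting linear syzygies to quadratic forms -/

section Lifting

theorem homogeneousComponent_mul {p q : Rx k n} {d : ℕ} (hq : q.IsHomogeneous d) (e : ℕ) :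
    homogeneousComponent (e + d) (p * q) = homogeneousComponent e p * q := by
  conv_lhs => rw [← sum_homogeneousComponent p, Finset.sum_mul, map_sum]
  have h : ∀ i, homogeneousComponent (e + d) (homogeneousComponent i p * q) =
      if i = e then homogeneousComponent e p * q else 0 := fun i => by
    rw [homogeneousComponent_of_mem ((homogeneousComponent_isHomogeneous i p).mul hq)]
    by_cases hi : i = e
    · subst hi; simp
    · rw [if_neg hi, if_neg (by omega)]
  simp only [h, Finset.sum_ite_eq', Finset.mem_range]
  split_ifs with h'
  · rfl
  · rw [homogeneousComponent_eq_zero _ _ (by omega), zero_mul]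

theorem exists_hom_coeffs {f : Fin (n+1) → Rx k n} {d : ℕ} (hf : ∀ i, (f i).IsHomogeneous d)
    {r : Rx k n} {s : ℕ} (hr : r.IsHomogeneous (s + d)) (h : r ∈ Ideal.span (Set.range f)) :
    ∃ c : Fin (n+1) → Rx k n, (∀ i, (c i).IsHomogeneous s) ∧ r = ∑ i, c i * f i := by
  obtain ⟨c, rfl⟩ := Ideal.mem_span_range_iff_exists_fun.mp h
  refine ⟨fun i => homogeneousComponent s (c i),
    fun i => homogeneousComponent_isHomogeneous _ _, ?_⟩
  conv_lhs => rw [← homogeneousComponent_eq_self hr, map_sum]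
  exact Finset.sum_congr rfl fun i _ => homogeneousComponent_mul (hf i) s

/-- A quadratic form `∑ b_{il} T_l T_i` belongs to `J` when the linear form obtained by
replacing the variables `T_l` by `f_l` comes from a syzygy: `f_m T_l ≡ f_l T_m` shows that it is
killed by `I` modulo `J⟨1⟩`. -/
theorem quad_mem_Jset {f : Fin (n+1) → Rx k n}
    (hprim : ∃ N : ℕ, (mIdeal k n) ^ N ≤ Ideal.span (Set.range f))
    (b : Fin (n+1) → Fin (n+1) → Rx k n) (hb : ∑ i, (∑ l, b i l * f l) * f i = 0) :
    (∑ l, X l * ∑ i, C (b i l) * X i : Sx k n) ∈ Jset f := by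
  obtain ⟨N, hN⟩ := hprim
  refine ⟨N, fun Q hQ => ?_⟩
  have hmS : mS k n = (mIdeal k n).map (C : Rx k n →+* Sx k n) := by
    rw [mS, mIdeal, Ideal.map_span, ← Set.range_comp]
    rfl
  rw [hmS, ← Ideal.map_pow] at hQ
  replace hQ := Ideal.map_mono hN hQ
  rw [Ideal.map_span, ← Set.range_comp] at hQ
  induction hQ using Submodule.span_induction with
  | mem Q hQ =>
    obtain ⟨m, rfl⟩ := hQ
    have e : (C : Rx k n →+* Sx k n) (f m) * (∑ l, X l * ∑ i, C (b i l) * X i) =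
        ∑ l, (∑ i, C (b i l) * X i) * (C (f m) * X l - C (f l) * X m) +
        X m * ∑ i, C (∑ l, b i l * f l) * X i := by
      have e2 : (∑ i, C (∑ l, b i l * f l) * X i : Sx k n) =
          ∑ l, C (f l) * ∑ i, C (b i l) * X i := by
        simp only [map_sum, Finset.sum_mul, Finset.mul_sum, map_mul]
        rw [Finset.sum_comm]
        exact Finset.sum_congr rfl fun l _ => Finset.sum_congr rfl fun i _ => by ring
      rw [e2, Finset.mul_sum, Finset.mul_sum, ← Finset.sum_add_distrib]
      exact Finset.sum_congr rfl fun l _ => by ring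
    rw [Function.comp_apply, e]
    refine add_mem (Ideal.sum_mem _ fun l _ => Ideal.mul_mem_left _ _ (KS_le_J1 f (KS_rel f m l)))
      (Ideal.mul_mem_left _ _ (lin_mem_J1 f _ hb))
  | zero => simp
  | add Q Q' _ _ h h' => rw [add_mul]; exact add_mem h h'
  | smul s Q _ h => rw [smul_eq_mul, mul_assoc]; exact Ideal.mul_mem_left _ _ h

/-- If every form of degree `μ + d` lies in `I`, the component of `X`-degree `μ + d` of
any element of `J⟨1⟩` is in the image of `Δ` modulo `KS`: the coefficients of each linear syzygy
can be written in terms of the `f_l`, and polarizing gives a quadratic form. -/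
theorem exists_lift {f : Fin (n+1) → Rx k n} {d μ : ℕ} (hf : ∀ i, (f i).IsHomogeneous d)
    (hprim : ∃ N : ℕ, (mIdeal k n) ^ N ≤ Ideal.span (Set.range f))
    (hR : ∀ r : Rx k n, r.IsHomogeneous (μ + d) → r ∈ Ideal.span (Set.range f))
    {β : Sx k n} (hβ : β ∈ J1 f) :
    ∃ α ∈ Jl f 2, XHomog μ α ∧ ∃ β' : Sx k n,
      (∀ γ, coeff γ β' = homogeneousComponent (μ + d) (coeff γ β)) ∧ down f α - β' ∈ KS f := by
  classical
  suffices h : ∀ s : Sx k n, ∃ α ∈ Jl f 2, XHomog μ α ∧ ∃ β' : Sx k n,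
      (∀ γ, coeff γ β' = homogeneousComponent (μ + d) (coeff γ (s * β))) ∧
        down f α - β' ∈ KS f by simpa using h 1
  have hadd : ∀ β₁ β₂ : Sx k n,
      (∃ α ∈ Jl f 2, XHomog μ α ∧ ∃ β' : Sx k n,
        (∀ γ, coeff γ β' = homogeneousComponent (μ + d) (coeff γ β₁)) ∧ down f α - β' ∈ KS f) →
      (∃ α ∈ Jl f 2, XHomog μ α ∧ ∃ β' : Sx k n,
        (∀ γ, coeff γ β' = homogeneousComponent (μ + d) (coeff γ β₂)) ∧ down f α - β' ∈ KS f) →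
      (∃ α ∈ Jl f 2, XHomog μ α ∧ ∃ β' : Sx k n,
        (∀ γ, coeff γ β' = homogeneousComponent (μ + d) (coeff γ (β₁ + β₂))) ∧
          down f α - β' ∈ KS f) := by
    rintro β₁ β₂ ⟨α₁, h1, h2, β₁', h3, h4⟩ ⟨α₂, g1, g2, β₂', g3, g4⟩
    refine ⟨α₁ + α₂, add_mem h1 g1, fun γ => ?_, β₁' + β₂', fun γ => ?_, ?_⟩
    · rw [coeff_add]; exact (h2 γ).add (g2 γ)
    · rw [coeff_add, coeff_add, map_add, h3, g3]
    · rw [down_add, add_sub_add_comm]; exact add_mem h4 g4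
  induction hβ using Submodule.span_induction with
  | mem β hβ =>
    obtain ⟨a, ha, rfl⟩ := hβ
    intro s
    induction s using MvPolynomial.induction_on' with
    | monomial γ c =>
      have ha' : ∑ i, homogeneousComponent (μ + d) (c * a i) * f i = 0 := by
        simp only [← homogeneousComponent_mul (hf _)]
        rw [← map_sum]
        simp only [mul_assoc, ← Finset.mul_sum, ha, mul_zero, map_zero]
      have hb : ∀ i, ∃ b : Fin (n+1) → Rx k n, (∀ l, (b l).IsHomogeneous μ) ∧
          homogeneousComponent (μ + d) (c * a i) = ∑ l, b l * f l := fun i =>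
        exists_hom_coeffs hf (homogeneousComponent_isHomogeneous _ _)
          (hR _ (homogeneousComponent_isHomogeneous _ _))
      choose b hbh hb using hb
      have hq := quad_mem_Jset hprim b (by simpa only [← hb] using ha')
      refine ⟨∑ l, X l * (monomial γ 1 * ∑ i, C (b i l) * X i), ?_, fun δ => ?_,
        monomial γ 1 * ∑ i, C (homogeneousComponent (μ + d) (c * a i)) * X i, fun δ => ?_, ?_⟩
      · simp only [mul_left_comm (X _) (monomial γ 1 : Sx k n), ← Finset.mul_sum]
        refine Ideal.mul_mem_left _ _ (Ideal.subset_span ⟨hq, ?_⟩)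
        refine totalDegree_finsetSum_le fun l _ => (totalDegree_mul _ _).trans ?_
        rw [totalDegree_X]
        have : (∑ i, C (b i l) * X i : Sx k n).totalDegree ≤ 1 :=
          totalDegree_finsetSum_le fun i _ => (totalDegree_mul _ _).trans (by
            rw [totalDegree_C, totalDegree_X])
        omega
      · simp only [Finset.mul_sum, coeff_sum]
        refine IsHomogeneous.sum _ _ _ fun l _ => IsHomogeneous.sum _ _ _ fun i _ => ?_
        rw [X, X, C_mul_monomial, monomial_mul, monomial_mul, coeff_monomial]
        split_ifs
        · simpa using hbh i l
        · exact isHomogeneous_zero _ _ _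
      · simp only [Finset.mul_sum, coeff_sum, map_sum]
        refine Finset.sum_congr rfl fun i _ => ?_
        rw [X, C_mul_monomial, C_mul_monomial, monomial_mul, monomial_mul, coeff_monomial,
          coeff_monomial]
        split_ifs <;> simp
      · have e : (monomial γ 1 * ∑ i, C (homogeneousComponent (μ + d) (c * a i)) * X i : Sx k n) =
            ∑ l, C (f l) * (monomial γ 1 * ∑ i, C (b i l) * X i) := by
          simp only [hb, map_sum, map_mul, Finset.sum_mul, Finset.mul_sum]
          rw [Finset.sum_comm]
          exact Finset.sum_congr rfl fun l _ => Finset.sum_congr rfl fun i _ => by ring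
        rw [e, down_sum, ← Finset.sum_sub_distrib]
        exact Ideal.sum_mem _ fun l _ => down_X_mul f l _
    | add s s' h h' => rw [add_mul]; exact hadd _ _ h h'
  | zero =>
    intro s
    exact ⟨0, zero_mem _, fun γ => by simpa using isHomogeneous_zero _ _ _, 0, by simp,
      by simp [down_zero]⟩
  | add β β' _ _ h h' => intro s; rw [mul_add]; exact hadd _ _ (h s) (h' s)
  | smul c β _ h => intro s; rw [smul_eq_mul, ← mul_assoc]; exact h _

end Lifting

/-! ### The Koszul cochain complex -/

section Complex

variable {B : Type*} [CommRing B] {m : ℕ}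

/-- The Koszul differential of `F` on cochains `Fin p → Fin m` with values in `B`. Cochains are
arbitrary functions of the index tuple, not only alternating ones; this keeps `dd_dd` and the
contracting homotopy `dd_cons` free of sign bookkeeping. -/
def dd (F : Fin m → B) {p : ℕ} (c : (Fin p → Fin m) → B) : (Fin (p+1) → Fin m) → B :=
  fun t => ∑ j : Fin (p+1), (-1) ^ (j : ℕ) * (F (t j) * c (fun i => t (j.succAbove i)))

theorem dd_zero_apply (F : Fin m → B) (c : (Fin 0 → Fin m) → B) (t : Fin 1 → Fin m) :
    dd F c t = F (t 0) * c Fin.elim0 := by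
  simp [dd]
  congr 2; funext i; exact i.elim0

/-- Contraction by the `i`-th basis vector is a homotopy between multiplication by `F i`
and zero. -/
theorem dd_cons (F : Fin m → B) {p : ℕ} (c : (Fin (p+1) → Fin m) → B) (i : Fin m)
    (t : Fin (p+1) → Fin m) :
    dd F c (Fin.cons i t) = F i * c t - dd F (fun t' => c (Fin.cons i t')) t := by
  unfold dd
  rw [Fin.sum_univ_succ, sub_eq_add_neg, ← Finset.sum_neg_distrib]
  congr 1
  · simp
  · refine Finset.sum_congr rfl fun j _ => ?_
    have : (fun l : Fin (p+1) => (Fin.cons i t : Fin (p+2) → Fin m) (j.succ.succAbove l)) =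
        Fin.cons i (fun l => t (j.succAbove l)) := by
      funext l
      refine Fin.cases ?_ (fun l => ?_) l
      · simp
      · simp
    rw [this, Fin.cons_succ, Fin.val_succ, pow_succ]
    ring

theorem dd_sub (F : Fin m → B) {p : ℕ} (c c' : (Fin p → Fin m) → B) :
    dd F (c - c') = dd F c - dd F c' := by
  funext t
  simp only [dd, Pi.sub_apply, mul_sub, Finset.sum_sub_distrib]

theorem dd_add (F : Fin m → B) {p : ℕ} (c c' : (Fin p → Fin m) → B) :
    dd F (c + c') = dd F c + dd F c' := by
  funext t
  simp only [dd, Pi.add_apply, mul_add, Finset.sum_add_distrib]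

theorem dd_smul (F : Fin m → B) {p : ℕ} (b : B) (c : (Fin p → Fin m) → B)
    (t : Fin (p+1) → Fin m) : dd F (fun t => b * c t) t = b * dd F c t := by
  simp only [dd, Finset.mul_sum]
  exact Finset.sum_congr rfl fun j _ => by ring

theorem dd_finsum (F : Fin m → B) {p : ℕ} {ι : Type*} (s : Finset ι)
    (c : ι → (Fin p → Fin m) → B) (t : Fin (p+1) → Fin m) :
    dd F (fun t => ∑ i ∈ s, c i t) t = ∑ i ∈ s, dd F (c i) t := by
  simp only [dd, Finset.mul_sum]
  exact Finset.sum_comm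

theorem dd_dd (F : Fin m → B) {p : ℕ} (c : (Fin p → Fin m) → B) (t : Fin (p+2) → Fin m) :
    dd F (dd F c) t = 0 := by
  induction p with
  | zero =>
    obtain ⟨i, t, rfl⟩ : ∃ i t', t = Fin.cons i t' := ⟨t 0, Fin.tail t, (Fin.cons_self_tail t).symm⟩
    rw [dd_cons]
    have h : (fun t' : Fin 0 → Fin m => dd F c (Fin.cons i t')) = fun t' => F i * c t' := by
      funext t'
      rw [dd_zero_apply, Fin.cons_zero, Subsingleton.elim t' Fin.elim0]
    rw [h, dd_smul, sub_self]
  | succ p ih =>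
    obtain ⟨i, t, rfl⟩ : ∃ i t', t = Fin.cons i t' := ⟨t 0, Fin.tail t, (Fin.cons_self_tail t).symm⟩
    rw [dd_cons]
    have h : (fun t' => dd F c (Fin.cons i t')) =
        (fun t' => F i * c t') - dd F (fun t' => c (Fin.cons i t')) := by
      funext t'
      rw [Pi.sub_apply, dd_cons]
    rw [h, dd_sub, Pi.sub_apply, dd_smul, ih, sub_zero, sub_self]

/-- The volume form, as a cochain: its value on a tuple is the sign of the tuple viewed as a
permutation, and `0` when the tuple is not injective. -/
def vol (B : Type*) [CommRing B] (m : ℕ) (t : Fin m → Fin m) : B :=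
  (Matrix.of fun a b : Fin m => if t a = b then (1 : B) else 0).det

theorem vol_id : vol B m id = 1 := by
  unfold vol
  have : (Matrix.of fun a b : Fin m => if id a = b then (1 : B) else 0) = 1 := by
    ext a b; simp [Matrix.one_apply]
  rw [this, Matrix.det_one]

/-- `vol` is closed: `dd F vol` is the determinant of a square matrix whose first column is a
combination of the other ones. -/
theorem dd_vol (F : Fin m → B) (t : Fin (m+1) → Fin m) : dd F (vol B m) t = 0 := by
  set M : Matrix (Fin (m+1)) (Fin (m+1)) B :=
    Matrix.of fun a b => Fin.cases (F (t a)) (fun b => if t a = b then 1 else 0) b with hM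
  have h1 : dd F (vol B m) t = M.det := by
    rw [Matrix.det_succ_column_zero]
    refine Finset.sum_congr rfl fun j _ => ?_
    rw [mul_assoc]
    rfl
  rw [h1]
  set v : Fin (m+1) → B := Fin.cons 1 fun b => - F b with hv
  have h2 : M.mulVec v = 0 := by
    funext a
    simp [Matrix.mulVec, dotProduct, Fin.sum_univ_succ, hM, hv]
  have h3 : (M.adjugate * M).mulVec v = 0 := by
    rw [← Matrix.mulVec_mulVec, h2, Matrix.mulVec_zero]
  rw [Matrix.adjugate_mul, Matrix.smul_mulVec, Matrix.one_mulVec] at h3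
  simpa [hv] using congrFun h3 0

end Complex

/-! ### Laurent polynomials and local cohomology -/

section Laurent

/-- Laurent polynomials in the variables `X_i`. -/
abbrev LA (k : Type*) [Field k] (n : ℕ) := AddMonoidAlgebra k (Fin n → ℤ)

/-- Exponent vectors of monomials, as exponent vectors of Laurent monomials. -/
def expHom (n : ℕ) : (Fin n →₀ ℕ) →+ (Fin n → ℤ) where
  toFun b i := b i
  map_zero' := by funext; simp
  map_add' b c := by funext; simp

theorem expHom_injective : Function.Injective (expHom n) := fun a b h => by
  ext i
  have := congrFun h i
  simpa [expHom] using this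

/-- The inclusion of `R` in its ring of Laurent polynomials. -/
def toL : Rx k n →+* LA k n := AddMonoidAlgebra.mapDomainRingHom k (expHom n)

theorem toL_monomial (b : Fin n →₀ ℕ) (c : k) :
    toL (monomial b c) = AddMonoidAlgebra.single (expHom n b) c :=
  AddMonoidAlgebra.mapDomain_single

theorem toL_injective : Function.Injective (toL : Rx k n → LA k n) :=
  AddMonoidAlgebra.mapDomain_injective expHom_injective

/-- Laurent polynomials with exponents in `U`. -/
def Sup (k : Type*) [Field k] {n : ℕ} (U : Set (Fin n → ℤ)) : Submodule k (LA k n) where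
  carrier := {p | ∀ a ∉ U, p.coeff a = 0}
  add_mem' {p q} hp hq a ha := by simp [hp a ha, hq a ha]
  zero_mem' a _ := by simp
  smul_mem' c p hp a ha := by simp [hp a ha]

theorem mem_Sup {U : Set (Fin n → ℤ)} {p : LA k n} : p ∈ Sup k U ↔ ∀ a ∉ U, p.coeff a = 0 :=
  Iff.rfl

theorem Sup_mono {U V : Set (Fin n → ℤ)} (h : U ⊆ V) : Sup k U ≤ Sup k V :=
  fun _ hp a ha => hp a fun h' => ha (h h')

theorem Sup_inter {U V : Set (Fin n → ℤ)} {p : LA k n} (h : p ∈ Sup k U) (h' : p ∈ Sup k V) :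
    p ∈ Sup k (U ∩ V) := fun a ha => by
  by_cases hU : a ∈ U
  · exact h' a fun hV => ha ⟨hU, hV⟩
  · exact h a hU

theorem Sup_union {U V : Set (Fin n → ℤ)} {p : LA k n} (h : p ∈ Sup k (U ∪ V)) :
    ∃ q ∈ Sup k U, ∃ q' ∈ Sup k V, p = q + q' := by
  classical
  refine ⟨.ofCoeff (p.coeff.filter (· ∈ U)), fun a ha => ?_,
    .ofCoeff (p.coeff.filter fun a => ¬ a ∈ U), fun a ha => ?_, ?_⟩
  · exact Finsupp.filter_apply_neg _ _ ha
  · by_cases hU : a ∈ U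
    · exact Finsupp.filter_apply_neg (fun a => ¬ a ∈ U) _ (by simpa using hU)
    · refine (Finsupp.filter_apply_pos (fun a => ¬ a ∈ U) _ hU).trans ?_
      exact h a (by simp [hU, ha])
  · exact AddMonoidAlgebra.ext (Finsupp.filter_add_filter_not _ _).symm

theorem single_mul_mem_Sup {U W : Set (Fin n → ℤ)} (b : Fin n → ℤ) (c : k)
    (h : ∀ a ∈ U, b + a ∈ W) {p : LA k n} (hp : p ∈ Sup k U) :
    AddMonoidAlgebra.single b c * p ∈ Sup k W := fun a ha => by
  rw [AddMonoidAlgebra.coeff_single_mul_apply, hp, mul_zero]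
  intro h'
  exact ha (by simpa using h _ h')

theorem toL_mul_mem_Sup {U W : Set (Fin n → ℤ)} (r : Rx k n)
    (h : ∀ b ∈ r.support, ∀ a ∈ U, expHom n b + a ∈ W) {p : LA k n} (hp : p ∈ Sup k U) :
    toL r * p ∈ Sup k W := by
  rw [← support_sum_monomial_coeff r, map_sum, Finset.sum_mul]
  refine Submodule.sum_mem _ fun b hb => ?_
  rw [toL_monomial]
  exact single_mul_mem_Sup _ _ (h b hb) hp

/-- Exponent vectors of total degree `e`. -/
def degSet (n : ℕ) (e : ℤ) : Set (Fin n → ℤ) := {a | ∑ i, a i = e}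

theorem sum_expHom (b : Fin n →₀ ℕ) : ∑ i, expHom n b i = b.degree := by
  rw [Finsupp.degree_eq_sum]; push_cast; rfl

theorem expHom_add_mem_degSet {r : Rx k n} {d : ℕ} (hr : r.IsHomogeneous d) {e e' : ℤ}
    (he : d + e = e') :
    ∀ b ∈ r.support, ∀ a ∈ degSet n e, expHom n b + a ∈ degSet n e' := fun b hb a ha => by
  have h1 : b.degree = d := by
    by_contra h; exact (mem_support_iff.mp hb) (hr.coeff_eq_zero h)
  simp only [degSet, Set.mem_ofPred_eq] at ha ⊢
  rw [← he, ← ha, ← h1, ← sum_expHom, ← Finset.sum_add_distrib]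
  rfl

theorem hom_mul_mem_degSet {r : Rx k n} {d : ℕ} (hr : r.IsHomogeneous d) {e e' : ℤ}
    (he : d + e = e') {p : LA k n} (hp : p ∈ Sup k (degSet n e)) :
    toL r * p ∈ Sup k (degSet n e') :=
  toL_mul_mem_Sup r (expHom_add_mem_degSet hr he) hp

theorem one_mem_Sup {U : Set (Fin n → ℤ)} (h : 0 ∈ U) : (1 : LA k n) ∈ Sup k U := fun a ha => by
  rw [AddMonoidAlgebra.one_def, AddMonoidAlgebra.coeff_single, Finsupp.single_apply, if_neg]
  rintro rfl; exact ha h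

/-- Exponents of the localization of `R` at `X_0, …, X_{j-1}`. -/
def Lset (n j : ℕ) : Set (Fin n → ℤ) := {a | ∀ i : Fin n, j ≤ i → 0 ≤ a i}

/-- `Lset n i` restricted to the exponents with a nonnegative entry before the index `j`. The
quotient of `Sup (Lset n j)` by `Sup (Nset n j j)` is spanned by the Laurent monomials with
negative exponents before `j` and nonnegative exponents from `j` on; it is the local cohomology
module `H^j` of `R` with support in `(X_0, …, X_{j-1})`. -/
def Nset (n i j : ℕ) : Set (Fin n → ℤ) := {a | a ∈ Lset n i ∧ ∃ l : Fin n, l < j ∧ 0 ≤ a l}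

theorem expHom_add_mem_Lset (b : Fin n →₀ ℕ) {j : ℕ} {a : Fin n → ℤ} (ha : a ∈ Lset n j) :
    expHom n b + a ∈ Lset n j := fun i hi =>
  add_nonneg (Int.natCast_nonneg _) (ha i hi)

theorem expHom_add_mem_Nset (b : Fin n →₀ ℕ) {i j : ℕ} {a : Fin n → ℤ} (ha : a ∈ Nset n i j) :
    expHom n b + a ∈ Nset n i j :=
  ⟨expHom_add_mem_Lset b ha.1, ha.2.choose, ha.2.choose_spec.1,
    add_nonneg (Int.natCast_nonneg _) ha.2.choose_spec.2⟩

theorem mul_mem_L (r : Rx k n) {j : ℕ} {p : LA k n} (hp : p ∈ Sup k (Lset n j)) :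
    toL r * p ∈ Sup k (Lset n j) :=
  toL_mul_mem_Sup r (fun b _ _ ha => expHom_add_mem_Lset b ha) hp

theorem mul_mem_N (r : Rx k n) {i j : ℕ} {p : LA k n} (hp : p ∈ Sup k (Nset n i j)) :
    toL r * p ∈ Sup k (Nset n i j) :=
  toL_mul_mem_Sup r (fun b _ _ ha => expHom_add_mem_Nset b ha) hp

theorem mem_range_toL {p : LA k n} (hp : p ∈ Sup k (Lset n 0)) : ∃ r, toL r = p := by
  have h : p = ∑ a ∈ p.coeff.support, AddMonoidAlgebra.single a (p.coeff a) := by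
    apply AddMonoidAlgebra.ext
    rw [AddMonoidAlgebra.coeff_sum]
    exact (Finsupp.sum_single _).symm
  rw [h]
  refine sum_mem (S := (toL : Rx k n →+* LA k n).range) fun a ha => ?_
  have ha' : a ∈ Lset n 0 := by
    by_contra h'; exact (Finsupp.mem_support_iff.mp ha) (hp a h')
  refine ⟨monomial (Finsupp.equivFunOnFinite.symm fun i => (a i).toNat) (p.coeff a), ?_⟩
  rw [toL_monomial]
  congr 1
  funext i
  simpa [expHom] using ha' i (Nat.zero_le _)

theorem dd_mem {F : Fin (n+1) → Rx k n} {U W : Set (Fin n → ℤ)}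
    (h : ∀ i, ∀ p ∈ Sup k U, toL (F i) * p ∈ Sup k W) {p : ℕ} {c : (Fin p → Fin (n+1)) → LA k n}
    (hc : ∀ t, c t ∈ Sup k U) (t : Fin (p+1) → Fin (n+1)) :
    dd (fun i => toL (F i)) c t ∈ Sup k W := by
  refine Submodule.sum_mem _ fun j _ => ?_
  rcases neg_one_pow_eq_or (LA k n) (j : ℕ) with h' | h' <;> rw [h']
  · rw [one_mul]; exact h _ _ (hc _)
  · rw [neg_one_mul]; exact Submodule.neg_mem _ (h _ _ (hc _))

end Laurent

/-! ### Descent of Koszul classes -/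

section Descent

/-- There is a cochain of degree `q + 1` and of internal degree `e₀ + q d` that represents a
nonzero class in the Koszul cohomology of `f` with coefficients in the local cohomology module
`Sup (Lset n j) / Sup (Nset n j j)`. -/
def HasClass (f : Fin (n+1) → Rx k n) (d : ℕ) (e₀ : ℤ) (j q : ℕ) : Prop :=
  ∃ z : (Fin (q+1) → Fin (n+1)) → LA k n,
    (∀ t, z t ∈ Sup k (Lset n j)) ∧ (∀ t, z t ∈ Sup k (degSet n (e₀ + q * d))) ∧
    (∀ t, dd (fun i => toL (f i)) z t ∈ Sup k (Nset n j j)) ∧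
    ¬ ∃ v : (Fin q → Fin (n+1)) → LA k n, (∀ t, v t ∈ Sup k (Lset n j)) ∧
      ∀ t, z t - dd (fun i => toL (f i)) v t ∈ Sup k (Nset n j j)

/-- A form outside `I`, times the volume form, is a nonzero class in top degree. -/
theorem hasClass_start (f : Fin (n+1) → Rx k n) {d s : ℕ} {r : Rx k n}
    (hr : r.IsHomogeneous s) (hrI : r ∉ Ideal.span (Set.range f)) :
    HasClass f d (s - n * d) 0 n := by
  have hz : ∀ t : Fin (n+1) → Fin (n+1), vol (LA k n) (n+1) t = toL (vol (Rx k n) (n+1) t) := by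
    intro t
    unfold vol
    rw [RingHom.map_det]
    congr 1
    ext1 a b
    simp [apply_ite]
  have hv : ∀ t : Fin (n+1) → Fin (n+1), (vol (Rx k n) (n+1) t).IsHomogeneous 0 := by
    intro t
    unfold vol
    rw [Matrix.det_apply]
    refine IsHomogeneous.sum _ _ _ fun σ _ => ?_
    have h : (∏ i, (Matrix.of fun a b : Fin (n+1) => if t a = b then (1 : Rx k n) else 0)
        (σ i) i).IsHomogeneous (∑ _i : Fin (n+1), 0) := by
      refine IsHomogeneous.prod _ _ _ fun i _ => ?_
      rw [Matrix.of_apply]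
      split_ifs
      · exact isHomogeneous_one _ _
      · exact isHomogeneous_zero _ _ _
    rw [Finset.sum_const_zero] at h
    rcases Int.units_eq_one_or (Equiv.Perm.sign σ) with h' | h' <;> rw [h']
    · simpa using h
    · simpa using h.neg
  refine ⟨fun t => toL r * vol (LA k n) (n+1) t, fun t => ?_, fun t => ?_, fun t => ?_, ?_⟩
  · beta_reduce
    rw [hz, ← map_mul, ← mul_one (toL _)]
    exact mul_mem_L _ (one_mem_Sup fun i _ => le_rfl)
  · beta_reduce
    rw [hz, ← map_mul, ← mul_one (toL _)]
    refine hom_mul_mem_degSet (d := s) (by simpa using hr.mul (hv t)) (e := 0) (by simp)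
      (one_mem_Sup (by simp [degSet]))
  · rw [dd_smul, dd_vol, mul_zero]
    exact zero_mem _
  · rintro ⟨v, hvL, hv'⟩
    have h := hv' id
    choose w hw using fun t => mem_range_toL (hvL t)
    have h0 : toL r * vol (LA k n) (n+1) id = dd (fun i => toL (f i)) v id := by
      rw [← sub_eq_zero]
      apply AddMonoidAlgebra.ext
      ext a
      exact h a fun ha => absurd ha.2.choose_spec.1 (Nat.not_lt_zero _)
    rw [vol_id, mul_one] at h0
    have h1 : r = dd f w id := by
      apply toL_injective
      rw [h0]
      simp only [dd, map_sum, map_mul, map_pow, map_neg, map_one, hw]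
    apply hrI
    rw [h1]
    refine Ideal.sum_mem _ fun j _ => Ideal.mul_mem_left _ _ (Ideal.mul_mem_right _ _ ?_)
    exact Ideal.subset_span ⟨_, rfl⟩

/-- The connecting homomorphism for `0 → M → M_x → M_x / M → 0`, `x = X_j`. As `x ^ N ∈ I` and `I`
annihilates Koszul cohomology, `M_x` has none: contraction by the coefficients of `x ^ N` is a
homotopy from `x ^ N` to zero. So a nonzero class over `M` comes from one over `M_x / M`, in
cohomological degree one less. -/
theorem hasClass_step {f : Fin (n+1) → Rx k n} {d : ℕ} (hf : ∀ i, (f i).IsHomogeneous d)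
    (hprim : ∃ N : ℕ, (mIdeal k n) ^ N ≤ Ideal.span (Set.range f))
    {e₀ : ℤ} {j q : ℕ} (hj : j < n) (h : HasClass f d e₀ j (q+1)) :
    HasClass f d e₀ (j+1) q := by
  obtain ⟨z, hzL, hzd, hz, hne⟩ := h
  obtain ⟨N, hN⟩ := hprim
  set x : Fin n := ⟨j, hj⟩ with hx
  have hxN : (X x : Rx k n) ^ (N + d) ∈ Ideal.span (Set.range f) := by
    rw [pow_add]
    exact Ideal.mul_mem_right _ _
      (hN (Ideal.pow_mem_pow (show X x ∈ mIdeal k n from Ideal.subset_span ⟨x, rfl⟩) N))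
  obtain ⟨c, hc, hcx⟩ := exists_hom_coeffs hf (by simpa using (isHomogeneous_X k x).pow (N + d)) hxN
  set ex : Fin n → ℤ := expHom n (Finsupp.single x (N + d)) with hex
  have hexv : ∀ i, ex i = if x = i then ((N + d : ℕ) : ℤ) else 0 := fun i => by
    simp only [hex, expHom, AddMonoidHom.coe_mk, ZeroHom.coe_mk, Finsupp.single_apply]
    split_ifs <;> simp
  set xi : LA k n := AddMonoidAlgebra.single (-ex) 1 with hxi
  have hxx : xi * toL (X x ^ (N + d)) = 1 := by
    rw [X_pow_eq_monomial, toL_monomial, AddMonoidAlgebra.single_mul_single,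
      AddMonoidAlgebra.one_def]
    simp [hex]
  have hxL : ∀ p ∈ Sup k (Lset n j), xi * p ∈ Sup k (Lset n (j+1)) := fun p hp => by
    refine single_mul_mem_Sup _ _ (fun a ha i hi => ?_) hp
    have : x ≠ i := fun h => by rw [← h] at hi; simp [hx] at hi
    rw [Pi.add_apply, Pi.neg_apply, hexv, if_neg this, neg_zero, zero_add]
    exact ha i (by omega)
  have hxN' : ∀ p ∈ Sup k (Nset n j j), xi * p ∈ Sup k (Nset n (j+1) j) := fun p hp => by
    refine single_mul_mem_Sup (W := Nset n (j+1) j) _ _ (fun a ha => ⟨fun i hi => ?_, ?_⟩) hp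
    · have : x ≠ i := fun h => by rw [← h] at hi; simp [hx] at hi
      rw [Pi.add_apply, Pi.neg_apply, hexv, if_neg this, neg_zero, zero_add]
      exact ha.1 i (by omega)
    · obtain ⟨l, hl, hl'⟩ := ha.2
      refine ⟨l, hl, ?_⟩
      have : x ≠ l := fun h => by rw [← h] at hl; simp [hx] at hl
      rwa [Pi.add_apply, Pi.neg_apply, hexv, if_neg this, neg_zero, zero_add]
  have hLN : Lset n j ⊆ Nset n (j+1) (j+1) := fun a ha =>
    ⟨fun i hi => ha i (by omega), x, by simp [hx], ha x le_rfl⟩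
  have hN'N : Nset n (j+1) j ⊆ Nset n (j+1) (j+1) := fun a ha =>
    ⟨ha.1, ha.2.choose, ha.2.choose_spec.1.trans (Nat.lt_succ_self j), ha.2.choose_spec.2⟩
  have hNsplit : Nset n (j+1) (j+1) ⊆ Lset n j ∪ Nset n (j+1) j := by
    rintro a ⟨ha, l, hl, hl'⟩
    by_cases h : (l : ℕ) < j
    · exact Or.inr ⟨ha, l, h, hl'⟩
    · refine Or.inl fun i hi => ?_
      rcases Nat.eq_or_lt_of_le hi with h' | h'
      · have : i = l := Fin.ext (by omega)
        rwa [this]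
      · exact ha i h'
  have hNN : Lset n j ∩ Nset n (j+1) j ⊆ Nset n j j := fun a ha => ⟨ha.1, ha.2.2⟩
  set F : Fin (n+1) → LA k n := fun i => toL (f i) with hF
  set w : (Fin (q+1) → Fin (n+1)) → LA k n :=
    fun t => xi * ∑ i, toL (c i) * z (Fin.cons i t) with hw
  have hwz : ∀ t, dd F w t = z t - xi * ∑ i, toL (c i) * dd F z (Fin.cons i t) := fun t => by
    rw [hw, dd_smul, dd_finsum]
    simp only [dd_smul, dd_cons, mul_sub, Finset.sum_sub_distrib]
    have : xi * ∑ i, toL (c i) * (F i * z t) = z t := by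
      have h1 : ∑ i, toL (c i) * (F i * z t) = toL (X x ^ (N + d)) * z t := by
        rw [hcx, map_sum, Finset.sum_mul]
        exact Finset.sum_congr rfl fun i _ => by rw [map_mul, mul_assoc]
      rw [h1, ← mul_assoc, hxx, one_mul]
    rw [this]; ring
  have hwz' : ∀ t, z t - dd F w t ∈ Sup k (Nset n (j+1) j) := fun t => by
    rw [hwz, sub_sub_cancel]
    exact hxN' _ (Submodule.sum_mem _ fun i _ => mul_mem_N _ (hz _))
  refine ⟨w, fun t => hxL _ (Submodule.sum_mem _ fun i _ => mul_mem_L _ (hzL _)), fun t => ?_,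
    fun t => ?_, ?_⟩
  · refine single_mul_mem_Sup (U := degSet n (N + (e₀ + (q+1 : ℕ) * d))) _ _ (fun a ha => ?_)
      (Submodule.sum_mem _ fun i _ => hom_mul_mem_degSet (hc i) rfl (hzd _))
    have : ∑ i, ex i = N + d := by
      rw [hex, sum_expHom]; simp
    simp only [degSet, Set.mem_ofPred_eq] at ha ⊢
    simp only [Pi.add_apply, Pi.neg_apply, Finset.sum_add_distrib, Finset.sum_neg_distrib, ha, this]
    push_cast; ring
  · have := Submodule.sub_mem _ (Sup_mono hLN (hzL t)) (Sup_mono hN'N (hwz' t))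
    rwa [sub_sub_cancel] at this
  · rintro ⟨v, hv, hvw⟩
    choose l hl l' hl' hll using fun t => Sup_union (Sup_mono hNsplit (hvw t))
    refine hne ⟨l, hl, fun t => Sup_mono hNN (Sup_inter ?_ ?_)⟩
    · exact Submodule.sub_mem _ (hzL t) (dd_mem (fun i p hp => mul_mem_L _ hp) hl t)
    -- `w` is `dd F v + l + l'` with `l` having coefficients in `M`; `dd F w` represents the class
    -- of `z` up to elements of `Sup (Nset n (j+1) j)`, hence `z` is cohomologous to `dd F l`.
    · have h1 : w - dd F v = l + l' := funext hll
      have h2 : dd F w t = dd F l t + dd F l' t := by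
        have := congrFun (congrArg (dd F) h1) t
        rwa [dd_sub, dd_add, Pi.sub_apply, Pi.add_apply, dd_dd, sub_zero] at this
      have h3 : z t - dd F l t = (z t - dd F w t) + dd F l' t := by rw [h2]; ring
      rw [h3]
      exact Submodule.add_mem _ (hwz' t) (dd_mem (fun i p hp => mul_mem_N _ hp) hl' t)

/-- After the `n` connecting homomorphisms the coefficients are in `H^n_m(R)` and the class is in
Koszul degree one. -/
theorem hasClass_end {f : Fin (n+1) → Rx k n} {d s : ℕ} (hf : ∀ i, (f i).IsHomogeneous d)
    (hprim : ∃ N : ℕ, (mIdeal k n) ^ N ≤ Ideal.span (Set.range f)) {r : Rx k n}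
    (hr : r.IsHomogeneous s) (hrI : r ∉ Ideal.span (Set.range f)) :
    HasClass f d (s - n * d) n 0 := by
  have : ∀ j q, j + q = n → HasClass f d (s - n * d) j q := by
    intro j
    induction j with
    | zero =>
      intro q hq
      have : q = n := by omega
      subst this
      exact hasClass_start f hr hrI
    | succ j ih => exact fun q hq => hasClass_step hf hprim (by omega) (ih (q+1) (by omega))
  exact this n 0 (by omega)

end Descent

/-! ### Residue duality -/

section Duality

/-- The residue: the coefficient of `∏ X_i⁻¹`. -/
def res : LA k n →ₗ[k] k where
  toFun p := p.coeff (fun _ => -1)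
  map_add' _ _ := by simp
  map_smul' _ _ := by simp

theorem res_monomial_mul (b : Fin n →₀ ℕ) (c : k) (p : LA k n) :
    res (toL (monomial b c) * p) = c * p.coeff (fun i => -1 - b i) := by
  rw [toL_monomial]
  change (AddMonoidAlgebra.single (expHom n b) c * p).coeff _ = _
  rw [AddMonoidAlgebra.coeff_single_mul_apply]
  congr 2
  funext i
  simp only [expHom, AddMonoidHom.coe_mk, ZeroHom.coe_mk, Pi.add_apply, Pi.neg_apply]
  ring

theorem res_of_mem_N {p : LA k n} (hp : p ∈ Sup k (Nset n n n)) : res p = 0 :=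
  hp _ fun h => by simpa using h.2.choose_spec.2

/-- Every functional on the forms of degree `e` is `r ↦ res (r v)` for some homogeneous Laurent
polynomial `v`. -/
theorem exists_res_eq (ψ : Module.Dual k (Rx k n)) (e : ℕ) :
    ∃ v : LA k n, v ∈ Sup k (degSet n (-n - e)) ∧
      ∀ r : Rx k n, r.IsHomogeneous e → res (toL r * v) = ψ r := by
  classical
  set s : Finset (Fin n →₀ ℕ) := Finset.finsuppAntidiag Finset.univ e with hs
  have hmem : ∀ b, b ∈ s ↔ b.degree = e := fun b => by
    rw [hs, Finset.mem_finsuppAntidiag, Finsupp.degree_eq_sum]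
    simp
  refine ⟨∑ b ∈ s, AddMonoidAlgebra.single (fun i => -1 - (b i : ℤ)) (ψ (monomial b 1)),
    Submodule.sum_mem _ fun b hb => ?_, fun r hr => ?_⟩
  · have h1 : (fun i => -1 - (b i : ℤ)) ∈ degSet n (-n - e) := by
      rw [hmem] at hb
      simp only [degSet, Set.mem_ofPred_eq, Finset.sum_sub_distrib]
      rw [← hb, Finsupp.degree_eq_sum]
      simp
    intro a ha
    rw [AddMonoidAlgebra.coeff_single, Finsupp.single_apply, if_neg]
    rintro rfl; exact ha h1
  · conv_rhs => rw [← support_sum_monomial_coeff r]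
    conv_lhs => rw [← support_sum_monomial_coeff r]
    rw [map_sum, map_sum, Finset.sum_mul, map_sum]
    refine Finset.sum_congr rfl fun b hb => ?_
    have hb' : b ∈ s := by
      rw [hmem]
      by_contra h; exact (mem_support_iff.mp hb) (hr.coeff_eq_zero h)
    rw [res_monomial_mul, AddMonoidAlgebra.coeff_sum, Finsupp.finsetSum_apply]
    have h1 : ∀ b' : Fin n →₀ ℕ, (AddMonoidAlgebra.single (fun i => -1 - (b' i : ℤ))
        (ψ (monomial b' 1))).coeff (fun i => -1 - (b i : ℤ)) =
        if b' = b then ψ (monomial b 1) else 0 := fun b' => by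
      rw [AddMonoidAlgebra.coeff_single, Finsupp.single_apply]
      by_cases h : b' = b
      · subst h; simp
      · rw [if_neg h, if_neg]
        intro h'
        apply h
        ext i
        have := congrFun h' i
        simpa using this
    simp only [h1, Finset.sum_ite_eq', hb', if_true]
    rw [← smul_eq_mul, ← map_smul, smul_monomial, smul_eq_mul, mul_one]

/-- A nonzero class in `H¹` with coefficients in the top local cohomology module gives a syzygy
that is not Koszul. Through the residue pairing a cocycle becomes a functional on tuples of forms
which vanishes on Koszul syzygies. If it vanished on all syzygies, it would factor through
`a ↦ ∑ a_i f_i`, and the factor would be the residue pairing with some `v` whose coboundary is the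
given cocycle. -/
theorem exists_syzygy {f : Fin (n+1) → Rx k n} {d : ℕ} (hf : ∀ i, (f i).IsHomogeneous d)
    {e₀ : ℤ} (h : HasClass f d e₀ n 0) :
    ∃ a : Fin (n+1) → Rx k n, ∃ e : ℕ, (e : ℤ) = -n - e₀ ∧
      (∀ i, (a i).IsHomogeneous e) ∧ ∑ i, a i * f i = 0 ∧ a ∉ koszulB1 f := by
  obtain ⟨z, -, hzd, hz, hne⟩ := h
  by_contra hcon
  apply hne
  set u : Fin (n+1) → LA k n := fun i => z fun _ => i with hu
  have hzu : ∀ t, z t = u (t 0) := fun t => by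
    simp only [hu]; congr 1; funext i; congr 1; exact Fin.ext (by omega)
  have hud : ∀ i, u i ∈ Sup k (degSet n e₀) := fun i => by simpa using hzd fun _ => i
  have huu : ∀ i l, toL (f i) * u l - toL (f l) * u i ∈ Sup k (Nset n n n) := fun i l => by
    have := hz (Fin.cons i fun _ => l)
    rwa [dd_cons, dd_zero_apply, hzu, hzu] at this
  suffices hv : ∃ v : LA k n, ∀ i, u i - toL (f i) * v ∈ Sup k (Nset n n n) by
    obtain ⟨v, hv⟩ := hv
    refine ⟨fun _ => v, fun t a ha => absurd (fun i hi => ?_) ha, fun t => ?_⟩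
    · exact absurd i.isLt (by omega)
    · rw [dd_zero_apply, hzu]
      exact hv _
  have hexp : ∀ a ∉ Nset n n n, ∃ b : Fin n →₀ ℕ, a = fun i => -1 - (b i : ℤ) := fun a ha => by
    refine ⟨Finsupp.equivFunOnFinite.symm fun i => (-1 - a i).toNat, ?_⟩
    funext i
    have : a i < 0 := by
      by_contra h
      exact ha ⟨fun i hi => absurd i.isLt (by omega), i, i.isLt, by omega⟩
    simp only [Finsupp.equivFunOnFinite_symm_apply_apply]
    omega
  have hdeg : ∀ b : Fin n →₀ ℕ, ∑ i, (-1 - (b i : ℤ)) = -n - (b.degree : ℤ) := fun b => by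
    rw [Finsupp.degree_eq_sum]; simp
  by_cases he : ∃ e : ℕ, (e : ℤ) = -n - e₀
  swap
  -- A Laurent monomial with only negative exponents has degree at most `-n`, so the class is zero
  -- when `-n - e₀ < 0`.
  · refine ⟨0, fun i a ha => ?_⟩
    obtain ⟨b, rfl⟩ := hexp a ha
    rw [mul_zero, sub_zero]
    refine hud i _ fun h => he ⟨b.degree, ?_⟩
    simp only [degSet, Set.mem_ofPred_eq, hdeg] at h
    omega
  obtain ⟨e, he⟩ := he
  set g : (Fin (n+1) → homogeneousSubmodule (Fin n) k e) →ₗ[k] Rx k n :=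
    { toFun := fun a => ∑ i, (a i : Rx k n) * f i
      map_add' := fun a b => by simp [add_mul, Finset.sum_add_distrib]
      map_smul' := fun c a => by simp [Finset.smul_sum] } with hg
  set φ : (Fin (n+1) → homogeneousSubmodule (Fin n) k e) →ₗ[k] k :=
    { toFun := fun a => ∑ i, res (toL (a i : Rx k n) * u i)
      map_add' := fun a b => by simp [add_mul, Finset.sum_add_distrib]
      map_smul' := fun c a => by
        have : ∀ r : Rx k n, toL (c • r) = c • toL r := fun r => by
          rw [smul_eq_C_mul, map_mul, C_apply, toL_monomial, map_zero]
          ext a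
          simp [AddMonoidAlgebra.coeff_single_mul_apply]
        simp [this, Finset.mul_sum] } with hφ
  have hkos : ∀ a ∈ koszulB1 f, ∑ i, toL (a i) * u i ∈ Sup k (Nset n n n) := fun a ha => by
    induction ha using Submodule.span_induction with
    | mem a ha =>
      obtain ⟨i, l, _, rfl⟩ := ha
      simpa [Pi.single_apply, sub_mul, Finset.sum_sub_distrib, apply_ite toL] using huu i l
    | zero => simp
    | add a b _ _ ha hb =>
      simp only [Pi.add_apply, map_add, add_mul, Finset.sum_add_distrib]
      exact Submodule.add_mem _ ha hb
    | smul r a _ ha =>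
      simp only [Pi.smul_apply, smul_eq_mul, map_mul, mul_assoc, ← Finset.mul_sum]
      exact mul_mem_N _ ha
  have hker : φ ∈ (LinearMap.ker g).dualAnnihilator := by
    rw [Submodule.mem_dualAnnihilator]
    intro a ha
    have ha' : (fun i => (a i : Rx k n)) ∈ koszulB1 f := by
      by_contra h
      exact hcon ⟨_, e, he, fun i => (a i).2, LinearMap.mem_ker.mp ha, h⟩
    have := res_of_mem_N (hkos _ ha')
    rwa [map_sum] at this
  rw [← LinearMap.range_dualMap_eq_dualAnnihilator_ker] at hker
  obtain ⟨ψ, hψ⟩ := hker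
  obtain ⟨v, hvd, hv⟩ := exists_res_eq ψ (e + d)
  refine ⟨v, fun i a ha => ?_⟩
  obtain ⟨b, rfl⟩ := hexp a ha
  by_cases hb : b.degree = e
  · have hbm : (monomial b (1 : k)).IsHomogeneous e := isHomogeneous_monomial _ hb
    have h1 := LinearMap.congr_fun hψ (Pi.single i ⟨monomial b 1, hbm⟩)
    have h2 : φ (Pi.single i ⟨monomial b 1, hbm⟩) = res (toL (monomial b 1) * u i) := by
      change ∑ l, res (toL ((Pi.single i ⟨monomial b 1, hbm⟩ :
        Fin (n+1) → homogeneousSubmodule (Fin n) k e) l : Rx k n) * u l) = _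
      rw [Finset.sum_eq_single i]
      · rw [Pi.single_eq_same]
      · intro l _ hl; rw [Pi.single_eq_of_ne hl]; simp
      · simp
    have h3 : g (Pi.single i ⟨monomial b 1, hbm⟩) = monomial b 1 * f i := by
      change ∑ l, ((Pi.single i ⟨monomial b 1, hbm⟩ :
        Fin (n+1) → homogeneousSubmodule (Fin n) k e) l : Rx k n) * f l = _
      rw [Finset.sum_eq_single i]
      · rw [Pi.single_eq_same]
      · intro l _ hl; rw [Pi.single_eq_of_ne hl]; simp
      · simp
    rw [LinearMap.dualMap_apply, h2, h3, ← hv _ (hbm.mul (hf i)), map_mul toL, mul_assoc,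
      res_monomial_mul, res_monomial_mul, one_mul, one_mul] at h1
    rw [AddMonoidAlgebra.coeff_sub, Finsupp.sub_apply, h1, sub_self]
  · have h1 : (fun i => -1 - (b i : ℤ)) ∉ degSet n e₀ := fun h => hb (by
      simp only [degSet, Set.mem_ofPred_eq, hdeg] at h
      omega)
    refine Submodule.sub_mem _ (hud i) (hom_mul_mem_degSet (hf i) ?_ hvd) _ h1
    push_cast
    omega

end Duality

/-! ### The downgrading map in degree two -/

/-- If `I` is `m`-primary: (a) for every `μ ≥ 0` the downgrading map
`λ₂^μ : (J⟨2⟩/J⟨1⟩)_μ → (J⟨1⟩/KS)_{μ+d}` is injective; (b) for every threshold integer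
`μ ≥ μ₀(I) = (n-1)(d-1) + d - indeg(H₁)`, it is surjective. -/
theorem downgrading_two
    (k : Type*) [Field k] (n d : ℕ) (hn : 2 ≤ n) (hd : 1 ≤ d)
    (f : Fin (n+1) → Rx k n)
    (hfh : ∀ i, (f i).IsHomogeneous d)
    (hfl : LinearIndependent k f)
    (I : Ideal (Rx k n)) (hI : I = Ideal.span (Set.range f))
    (hprim : ∃ N : ℕ, (mIdeal k n) ^ N ≤ I) :
    (∀ μ : ℕ, ∀ α ∈ Jl f 2, XHomog μ α → down f α ∈ KS f → α ∈ Jl f 1) ∧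
    (∀ μ : ℕ, ((n - 1) * (d - 1) + d : ℕ∞) ≤ (μ : ℕ∞) + indegE {ν | H1Nonzero f d ν} →
      ∀ β ∈ Jl f 1, XHomog (μ + d) β →
        ∃ α ∈ Jl f 2, XHomog μ α ∧ down f α - β ∈ KS f) := by
  subst hI
  refine ⟨fun μ α hα _ hd => J1_subset_Jl f 1 le_rfl
    (mem_J1_of_down f (coeff_zero_of_mem_Jl (by omega) f 2 hα) hd), fun μ hμ β hβ hβh => ?_⟩
  have hR : ∀ r : Rx k n, r.IsHomogeneous (μ + d) → r ∈ Ideal.span (Set.range f) := by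
    intro r hr
    by_contra hrI
    obtain ⟨a, e, he, ha, haf, haB⟩ := exists_syzygy hfh (hasClass_end hfh hprim hr hrI)
    have h1 : indegE {ν | H1Nonzero f d ν} ≤ ((e + d : ℕ) : ℕ∞) :=
      sInf_le ⟨e + d, ⟨a, e, rfl, ha, haf, haB⟩, rfl⟩
    have h2 : (((n - 1) * (d - 1) + d : ℕ) : ℕ∞) ≤ ((μ + (e + d) : ℕ) : ℕ∞) := by
      push_cast
      push_cast at h1
      exact hμ.trans (by gcongr)
    have h3 : (n - 1) * (d - 1) + d ≤ μ + (e + d) := by exact_mod_cast h2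
    obtain ⟨n', rfl⟩ : ∃ n', n = n' + 1 := ⟨n - 1, by omega⟩
    obtain ⟨d', rfl⟩ : ∃ d', d = d' + 1 := ⟨d - 1, by omega⟩
    simp only [Nat.add_sub_cancel] at h3
    have h4 : (n' : ℤ) * d' + (d' + 1) ≤ μ + (e + (d' + 1)) := by exact_mod_cast h3
    push_cast at he
    nlinarith
  obtain ⟨α, h1, h2, β', h3, h4⟩ := exists_lift hfh hprim hR (Jl_one_le (by omega) f hβ)
  have : β' = β := by
    ext1 γ
    rw [h3, homogeneousComponent_eq_self (hβh γ)]
  exact ⟨α, h1, h2, this ▸ h4⟩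

end
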